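/- arXiv:1105.0105 — 11 statements merged into one kernel-verified Lean document; each statement's English description precedes it below -/
import Mathlib

section
/- For every subspace Δ ⊆ V and every skew-symmetric bilinear form Ω on V, the set D(Δ,Ω) = {(v,α) ∈ V × V* : v ∈ Δ and α(w) = Ω(v,w) for all w ∈ Δ} is a Dirac structure on V. -/
/-- The symmetric pairing on `V × V*`: `⟨⟨(v,α),(w,β)⟩⟩ = α(w) + β(v)`. -/
def symPair {V : Type*} [AddCommGroup V] [Module ℝ V]
    (x y : V × Module.Dual ℝ V) : ℝ := x.2 y.1 + y.2 x.1

/-- A Dirac structure on `V` is a subspace `D ⊆ V × V*` with `D = D^⊥`,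
where the orthogonal complement is taken relative to the symmetric pairing. -/
def IsDirac {V : Type*} [AddCommGroup V] [Module ℝ V]
    (D : Set (V × Module.Dual ℝ V)) : Prop :=
  ∀ y, y ∈ D ↔ ∀ x ∈ D, symPair x y = 0

/-- For every subspace `Δ ⊆ V` and every skew-symmetric bilinear form `Ω` on `V`,
the set `D(Δ,Ω) = {(v,α) : v ∈ Δ and α(w) = Ω(v,w) for all w ∈ Δ}` is a Dirac
structure on `V`. -/
theorem inducedDirac_isDirac
    {V : Type*} [AddCommGroup V] [Module ℝ V] [FiniteDimensional ℝ V]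
    (Δ : Submodule ℝ V) (Ω : V →ₗ[ℝ] V →ₗ[ℝ] ℝ)
    (hΩ : ∀ v w, Ω v w = - Ω w v) :
    IsDirac {p : V × Module.Dual ℝ V | p.1 ∈ Δ ∧ ∀ w ∈ Δ, p.2 w = Ω p.1 w} := by
  rintro ⟨w, β⟩
  simp only [Set.mem_setOf_eq, symPair, Prod.forall]
  constructor
  · rintro ⟨hw, hβ⟩ v α ⟨hv, hα⟩
    rw [hα w hw, hβ v hv, hΩ v w]
    ring
  · intro h
    have hw : w ∈ Δ := by
      by_contra hn
      obtain ⟨f, hf, hle⟩ := Submodule.exists_le_ker_of_notMem hn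
      have h0 := h 0 f ⟨Δ.zero_mem, fun u hu => by simpa using hle hu⟩
      exact hf (by simpa using h0)
    refine ⟨hw, fun v hv => ?_⟩
    have h1 := h v (Ω v) ⟨hv, fun _ _ => rfl⟩
    have h2 := hΩ v w
    linarith
end

section
/- Every Dirac structure D on V is recovered from its projection and its Dirac two-form: with Δ = pr_V(D) and Ω_Δ the Dirac two-form of D, one has D = {(v,α) ∈ V × V* : v ∈ Δ and α(w) = Ω_Δ(v,w) for all w ∈ Δ}. -/
/-- Every Dirac structure `D` on `V` is recovered from its projection
`Δ = pr_V(D)` and its Dirac two-form `Ω_Δ` (any function `Ω` satisfying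
`Ω(v₁,v₂) = α₁(v₂)` for all `(v₁,α₁), (v₂,α₂) ∈ D`):
`D = {(v,α) : v ∈ Δ and α(w) = Ω_Δ(v,w) for all w ∈ Δ}`. -/
theorem dirac_recovered_from_two_form
    {V : Type*} [AddCommGroup V] [Module ℝ V] [FiniteDimensional ℝ V]
    (D : Set (V × Module.Dual ℝ V)) (hD : IsDirac D)
    (Ω : V → V → ℝ) (hΩ : ∀ p ∈ D, ∀ q ∈ D, Ω p.1 q.1 = p.2 q.1) :
    D = {p : V × Module.Dual ℝ V |
      (∃ α, (p.1, α) ∈ D) ∧ ∀ w : V, (∃ β, (w, β) ∈ D) → p.2 w = Ω p.1 w} := by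
  ext p
  constructor
  · intro hp
    refine ⟨⟨p.2, hp⟩, ?_⟩
    rintro w ⟨β, hw⟩
    exact (hΩ p hp (w, β) hw).symm
  · rintro ⟨⟨α, hα⟩, h⟩
    rw [hD p]
    intro x hx
    have h1 : p.2 x.1 = Ω p.1 x.1 := h x.1 ⟨x.2, hx⟩
    have h2 : Ω p.1 x.1 = α x.1 := hΩ (p.1, α) hα x hx
    have h3 : x.2 p.1 + α x.1 = 0 := (hD (p.1, α)).1 hα x hx
    change x.2 p.1 + p.2 x.1 = 0
    rw [h1, h2, h3]
end

section
/- If D_a and D_b are Dirac structures on V, then the bowtie product D_a ⋈ D_b is a Dirac structure on V. -/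
/-- The bowtie product `D_a ⋈ D_b`: all `(v,α)` such that there exists
`β ∈ V*` with `(v, α+β) ∈ D_a` and `(v, −β) ∈ D_b`. -/
def bowtie {V : Type*} [AddCommGroup V] [Module ℝ V]
    (Da Db : Set (V × Module.Dual ℝ V)) : Set (V × Module.Dual ℝ V) :=
  {p | ∃ β : Module.Dual ℝ V, (p.1, p.2 + β) ∈ Da ∧ (p.1, -β) ∈ Db}

/-- A Dirac structure as a submodule. -/
def IsDirac.toSub {V : Type*} [AddCommGroup V] [Module ℝ V]
    {D : Set (V × Module.Dual ℝ V)} (h : IsDirac D) : Submodule ℝ (V × (V →ₗ[ℝ] ℝ)) where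
  carrier := D
  zero_mem' := by
    rw [h]
    intro x _
    simp [symPair]
  add_mem' := by
    intro a b ha hb
    rw [h] at ha hb ⊢
    intro x hx
    have h1 := ha x hx
    have h2 := hb x hx
    simp only [symPair, Prod.fst_add, Prod.snd_add, map_add, LinearMap.add_apply] at *
    linarith
  smul_mem' := by
    intro c a ha
    rw [h] at ha ⊢
    intro x hx
    have h1 := ha x hx
    simp only [symPair, Prod.smul_fst, Prod.smul_snd, map_smul, LinearMap.smul_apply,
      smul_eq_mul] at *
    rw [← mul_add, h1, mul_zero]

theorem factor_aux {M V : Type*} [AddCommGroup M] [Module ℝ M] [AddCommGroup V] [Module ℝ V]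
    (g : M →ₗ[ℝ] V) (φ : M →ₗ[ℝ] ℝ) (h : ∀ x, g x = 0 → φ x = 0) :
    ∃ β : V →ₗ[ℝ] ℝ, ∀ x, β (g x) = φ x := by
  have : φ ∈ LinearMap.range g.dualMap := by
    rw [LinearMap.range_dualMap_eq_dualAnnihilator_ker, Submodule.mem_dualAnnihilator]
    exact fun x hx => h x hx
  obtain ⟨β, hβ⟩ := this
  exact ⟨β, fun x => LinearMap.congr_fun hβ x⟩

theorem factor_aux2 {P V : Type*} [AddCommGroup P] [Module ℝ P] [AddCommGroup V] [Module ℝ V]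
    (A B : Submodule ℝ P) (π : P →ₗ[ℝ] V) (f₁ f₂ : P →ₗ[ℝ] ℝ)
    (h : ∀ x ∈ A, ∀ y ∈ B, π x = π y → f₁ x + f₂ y = 0) :
    ∃ β : V →ₗ[ℝ] ℝ, (∀ x ∈ A, β (π x) = f₁ x) ∧ (∀ y ∈ B, - β (π y) = f₂ y) := by
  obtain ⟨β, hβ⟩ := factor_aux
    ((π ∘ₗ A.subtype).coprod (-(π ∘ₗ B.subtype)))
    ((f₁ ∘ₗ A.subtype).coprod (f₂ ∘ₗ B.subtype)) (by
      rintro ⟨⟨x, hx⟩, ⟨y, hy⟩⟩ hk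
      simp only [LinearMap.coprod_apply, LinearMap.neg_apply, LinearMap.comp_apply,
        Submodule.subtype_apply] at hk ⊢
      exact h x hx y hy (by rwa [← sub_eq_add_neg, sub_eq_zero] at hk))
  refine ⟨β, fun x hx => ?_, fun y hy => ?_⟩
  · simpa using hβ (⟨x, hx⟩, 0)
  · simpa using hβ (0, ⟨y, hy⟩)

/-- If `D_a` and `D_b` are Dirac structures on `V`, then the bowtie product
`D_a ⋈ D_b` is a Dirac structure on `V`. -/
theorem bowtie_isDirac
    {V : Type*} [AddCommGroup V] [Module ℝ V] [FiniteDimensional ℝ V]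
    (Da Db : Set (V × Module.Dual ℝ V))
    (ha : IsDirac Da) (hb : IsDirac Db) :
    IsDirac (bowtie Da Db) := by
  rintro ⟨w, γ⟩
  constructor
  · rintro ⟨β, h1, h2⟩ ⟨v, α⟩ ⟨β', h3, h4⟩
    have e1 := (ha _).1 h1 _ h3
    have e2 := (hb _).1 h2 _ h4
    simp only [symPair, LinearMap.add_apply, LinearMap.neg_apply] at *
    linarith
  · intro H
    obtain ⟨β, h1, h2⟩ := factor_aux2 ha.toSub hb.toSub (LinearMap.fst ℝ V (V →ₗ[ℝ] ℝ))
      ((LinearMap.applyₗ w) ∘ₗ LinearMap.snd ℝ V (V →ₗ[ℝ] ℝ) + γ ∘ₗ LinearMap.fst ℝ V (V →ₗ[ℝ] ℝ))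
      ((LinearMap.applyₗ w) ∘ₗ LinearMap.snd ℝ V (V →ₗ[ℝ] ℝ)) (by
        rintro ⟨v, α₁⟩ h1 ⟨v', α₂⟩ h2 hk
        have h1 : (v, α₁) ∈ Da := h1
        have h2 : (v', α₂) ∈ Db := h2
        have hv : v = v' := hk
        subst hv
        have e : (α₁ + α₂) w + γ v = 0 :=
          H (v, α₁ + α₂) ⟨-α₂, by simpa using h1, by simpa using h2⟩
        have e' : α₁ w + α₂ w + γ v = 0 := e
        change α₁ w + γ v + α₂ w = 0
        linarith)
    refine ⟨-β, (ha _).2 ?_, (hb _).2 ?_⟩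
    · rintro ⟨v, α⟩ hx
      have e : β v = α w + γ v := h1 (v, α) hx
      change α w + (γ v + - β v) = 0
      linarith
    · rintro ⟨v, α⟩ hx
      have e : - β v = α w := h2 (v, α) hx
      change α w + - - β v = 0
      linarith
end

section
/- Let D_a and D_b be Dirac structures on V, with Δ_a = pr_V(D_a), Δ_b = pr_V(D_b), and Dirac two-forms Ω_a on Δ_a and Ω_b on Δ_b. Then (v,α) ∈ D_a ⋈ D_b if and only if v ∈ Δ_a ∩ Δ_b and α(w) = Ω_a(v,w) + Ω_b(v,w) for all w ∈ Δ_a ∩ Δ_b; in particular, pr_V(D_a ⋈ D_b) = Δ_a ∩ Δ_b and the Dirac two-form of D_a ⋈ D_b is (Ω_a + Ω_b) restricted to Δ_a ∩ Δ_b. -/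
theorem symPair_shift {V : Type*} [AddCommGroup V] [Module ℝ V]
    {D : Set (V × Module.Dual ℝ V)} (h : IsDirac D) {v : V} {a g : Module.Dual ℝ V}
    (hv : (v, a) ∈ D) (hg : ∀ x ∈ D, g x.1 = 0) : (v, a + g) ∈ D := by
  rw [h]
  intro x hx
  have h1 := (h (v, a)).1 hv x hx
  have h2 := hg x hx
  simp only [symPair, LinearMap.add_apply] at *
  linarith

/-- The projection of a Dirac structure to `V`, as a submodule. -/
def dirProj {V : Type*} [AddCommGroup V] [Module ℝ V]
    (D : Set (V × Module.Dual ℝ V)) (h : IsDirac D) : Submodule ℝ V where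
  carrier := {v | ∃ α, (v, α) ∈ D}
  zero_mem' := ⟨0, by rw [h]; intro x _; simp [symPair]⟩
  add_mem' := by
    rintro v w ⟨a, ha⟩ ⟨b, hb⟩
    refine ⟨a + b, ?_⟩
    rw [h]
    intro x hx
    have h1 := (h _).1 ha x hx
    have h2 := (h _).1 hb x hx
    simp only [symPair, LinearMap.add_apply, map_add] at *
    linarith
  smul_mem' := by
    rintro c v ⟨a, ha⟩
    refine ⟨c • a, ?_⟩
    rw [h]
    intro x hx
    have h1 := (h _).1 ha x hx
    simp only [symPair, LinearMap.smul_apply, map_smul, smul_eq_mul] at *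
    linear_combination c * h1

/-- Let `D_a` and `D_b` be Dirac structures on `V` with projections
`Δ_a = pr_V(D_a)`, `Δ_b = pr_V(D_b)` and Dirac two-forms `Ω_a`, `Ω_b`.
Then `(v,α) ∈ D_a ⋈ D_b` iff `v ∈ Δ_a ∩ Δ_b` and
`α(w) = Ω_a(v,w) + Ω_b(v,w)` for all `w ∈ Δ_a ∩ Δ_b`; in particular
`pr_V(D_a ⋈ D_b) = Δ_a ∩ Δ_b`. -/
theorem bowtie_characterization
    {V : Type*} [AddCommGroup V] [Module ℝ V] [FiniteDimensional ℝ V]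
    (Da Db : Set (V × Module.Dual ℝ V))
    (ha : IsDirac Da) (hb : IsDirac Db)
    (Ωa Ωb : V → V → ℝ)
    (hΩa : ∀ p ∈ Da, ∀ q ∈ Da, Ωa p.1 q.1 = p.2 q.1)
    (hΩb : ∀ p ∈ Db, ∀ q ∈ Db, Ωb p.1 q.1 = p.2 q.1) :
    (∀ (v : V) (α : Module.Dual ℝ V),
      (v, α) ∈ bowtie Da Db ↔
        ((∃ αa, (v, αa) ∈ Da) ∧ (∃ αb, (v, αb) ∈ Db) ∧
          ∀ w : V, (∃ βa, (w, βa) ∈ Da) → (∃ βb, (w, βb) ∈ Db) →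
            α w = Ωa v w + Ωb v w)) ∧
    {v | ∃ α, (v, α) ∈ bowtie Da Db}
      = {v | ∃ α, (v, α) ∈ Da} ∩ {v | ∃ α, (v, α) ∈ Db} := by
  have main : ∀ (v : V) (α : Module.Dual ℝ V),
      (v, α) ∈ bowtie Da Db ↔
        ((∃ αa, (v, αa) ∈ Da) ∧ (∃ αb, (v, αb) ∈ Db) ∧
          ∀ w : V, (∃ βa, (w, βa) ∈ Da) → (∃ βb, (w, βb) ∈ Db) →
            α w = Ωa v w + Ωb v w) := by
    intro v α
    constructor
    · rintro ⟨β, h1, h2⟩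
      refine ⟨⟨_, h1⟩, ⟨_, h2⟩, ?_⟩
      rintro w ⟨βa, h3⟩ ⟨βb, h4⟩
      have h5 := hΩa _ h1 _ h3
      have h6 := hΩb _ h2 _ h4
      simp only [LinearMap.add_apply, LinearMap.neg_apply] at h5 h6
      rw [h5, h6]
      ring
    · rintro ⟨⟨αa, h1⟩, ⟨αb, h2⟩, h⟩
      have hγ : α - αa - αb ∈ (dirProj Da ha ⊓ dirProj Db hb).dualAnnihilator := by
        rw [Submodule.mem_dualAnnihilator]
        rintro w ⟨⟨βa, h3⟩, ⟨βb, h4⟩⟩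
        have h5 := hΩa _ h1 _ h3
        have h6 := hΩb _ h2 _ h4
        have h7 := h w ⟨βa, h3⟩ ⟨βb, h4⟩
        simp only [LinearMap.sub_apply] at *
        linarith
      rw [Subspace.dualAnnihilator_inf_eq, Submodule.mem_sup] at hγ
      obtain ⟨γa, hγa, γb, hγb, hsum⟩ := hγ
      rw [Submodule.mem_dualAnnihilator] at hγa hγb
      refine ⟨-(αb + γb), ?_, ?_⟩
      · have e : α + -(αb + γb) = αa + γa := by
          rw [eq_sub_of_add_eq hsum]
          abel
        show (v, α + -(αb + γb)) ∈ Da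
        rw [e]
        exact symPair_shift ha h1 fun x hx => hγa _ ⟨x.2, hx⟩
      · show (v, - -(αb + γb)) ∈ Db
        rw [neg_neg]
        exact symPair_shift hb h2 fun x hx => hγb _ ⟨x.2, hx⟩
  refine ⟨main, ?_⟩
  ext v
  constructor
  · rintro ⟨α, β, h1, h2⟩
    exact ⟨⟨_, h1⟩, ⟨_, h2⟩⟩
  · rintro ⟨⟨a, h1⟩, ⟨b, h2⟩⟩
    refine ⟨a + b, -b, ?_, ?_⟩
    · simpa using h1
    · simpa using h2
end

section
/- Let D_a and D_b be Dirac structures on V with Δ_a = pr_V(D_a), Δ_b = pr_V(D_b), and Dirac two-forms Ω_a and Ω_b. If Ω_b = 0 (identically on Δ_b × Δ_b), then D_b = Δ_b × Δ_b°, and D_a ⋈ D_b = {(v,α) ∈ V × V* : v ∈ Δ_a ∩ Δ_b and α(w) = Ω_a(v,w) for all w ∈ Δ_a ∩ Δ_b}. -/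
def diracProj {V : Type*} [AddCommGroup V] [Module ℝ V]
    (D : Set (V × Module.Dual ℝ V)) (h : IsDirac D) : Submodule ℝ V where
  carrier := {v | ∃ α, (v, α) ∈ D}
  zero_mem' := ⟨0, (h _).2 fun x _ => by simp [symPair]⟩
  add_mem' := by
    rintro a b ⟨α, hα⟩ ⟨β, hβ⟩
    refine ⟨α + β, (h _).2 fun x hx => ?_⟩
    have h1 := (h _).1 hα x hx
    have h2 := (h _).1 hβ x hx
    simp only [symPair, map_add, LinearMap.add_apply] at *
    linarith
  smul_mem' := by
    rintro c a ⟨α, hα⟩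
    refine ⟨c • α, (h _).2 fun x hx => ?_⟩
    have h1 := (h _).1 hα x hx
    simp only [symPair, map_smul, LinearMap.smul_apply, smul_eq_mul] at *
    rw [← mul_add, h1, mul_zero]

theorem dirac_shift {V : Type*} [AddCommGroup V] [Module ℝ V]
    (D : Set (V × Module.Dual ℝ V)) (h : IsDirac D) (v : V) (α γ : Module.Dual ℝ V)
    (hv : (v, α) ∈ D) (hγ : ∀ w, (∃ β, (w, β) ∈ D) → γ w = 0) : (v, α + γ) ∈ D := by
  refine (h _).2 fun x hx => ?_
  have h1 := (h _).1 hv x hx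
  have h2 := hγ x.1 ⟨x.2, hx⟩
  simp only [symPair, LinearMap.add_apply] at *
  linarith

/-- Let `D_a`, `D_b` be Dirac structures on `V` with `Δ_a = pr_V(D_a)`,
`Δ_b = pr_V(D_b)` and Dirac two-forms `Ω_a`, `Ω_b`.  If `Ω_b = 0`
(identically on `Δ_b × Δ_b`), then `D_b = Δ_b × Δ_b°`, and `D_a ⋈ D_b` is the
Dirac structure induced by the constraint `Δ_a ∩ Δ_b` and the two-form `Ω_a`. -/
theorem bowtie_with_zero_form
    {V : Type*} [AddCommGroup V] [Module ℝ V] [FiniteDimensional ℝ V]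
    (Da Db : Set (V × Module.Dual ℝ V))
    (ha : IsDirac Da) (hb : IsDirac Db)
    (Ωa : V → V → ℝ)
    (hΩa : ∀ p ∈ Da, ∀ q ∈ Da, Ωa p.1 q.1 = p.2 q.1)
    (hΩb0 : ∀ p ∈ Db, ∀ q ∈ Db, p.2 q.1 = 0) :
    Db = {p : V × Module.Dual ℝ V |
        (∃ β, (p.1, β) ∈ Db) ∧ ∀ w : V, (∃ β, (w, β) ∈ Db) → p.2 w = 0} ∧
    bowtie Da Db = {p : V × Module.Dual ℝ V |
        ((∃ α, (p.1, α) ∈ Da) ∧ (∃ β, (p.1, β) ∈ Db)) ∧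
        ∀ w : V, (∃ α, (w, α) ∈ Da) → (∃ β, (w, β) ∈ Db) →
          p.2 w = Ωa p.1 w} := by
  have key : ∀ v α, (∃ β, (v, β) ∈ Db) → (∀ w : V, (∃ β, (w, β) ∈ Db) → α w = 0) →
      (v, α) ∈ Db := by
    rintro v α ⟨β, hβ⟩ hα
    refine (hb _).2 fun x hx => ?_
    have h1 := hΩb0 x hx _ hβ
    have h2 := hα x.1 ⟨x.2, hx⟩
    simp only [symPair] at *
    linarith
  refine ⟨?_, ?_⟩
  · ext ⟨v, α⟩
    constructor
    · intro hp
      exact ⟨⟨α, hp⟩, fun w ⟨β, hw⟩ => hΩb0 _ hp _ hw⟩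
    · rintro ⟨h1, h2⟩
      exact key v α h1 h2
  · ext ⟨v, α⟩
    constructor
    · rintro ⟨β, h1, h2⟩
      refine ⟨⟨⟨_, h1⟩, ⟨_, h2⟩⟩, ?_⟩
      rintro w ⟨α', hw⟩ ⟨β', hw'⟩
      have e1 := hΩa _ h1 _ hw
      have e2 := hΩb0 _ h2 _ hw'
      simp only [LinearMap.add_apply, LinearMap.neg_apply] at *
      linarith
    · rintro ⟨⟨⟨α₀, h1⟩, h2⟩, h3⟩
      have hm : α - α₀ ∈ (diracProj Da ha ⊓ diracProj Db hb).dualAnnihilator := by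
        rw [Submodule.mem_dualAnnihilator]
        rintro w ⟨⟨α', hw⟩, hw'⟩
        have e1 := hΩa _ h1 _ hw
        have e2 := h3 w ⟨α', hw⟩ hw'
        simp only [LinearMap.sub_apply] at *
        linarith
      rw [Subspace.dualAnnihilator_inf_eq, Submodule.mem_sup] at hm
      obtain ⟨γa, hγa, γb, hγb, e⟩ := hm
      rw [Submodule.mem_dualAnnihilator] at hγa hγb
      refine ⟨-γb, ?_, ?_⟩
      · have h4 := dirac_shift Da ha v α₀ γa h1 hγa
        have e' : α + -γb = α₀ + γa := by
          rw [eq_sub_iff_add_eq] at e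
          rw [← e]; abel
        simpa only [e'] using h4
      · simpa only [neg_neg] using key v γb h2 hγb
end

section
/- The bowtie product of Dirac structures is associative: for any Dirac structures D_a, D_b, D_c on V, (D_a ⋈ D_b) ⋈ D_c = D_a ⋈ (D_b ⋈ D_c). -/
/-- The bowtie product of Dirac structures is associative:
`(D_a ⋈ D_b) ⋈ D_c = D_a ⋈ (D_b ⋈ D_c)`. -/
theorem bowtie_assoc
    {V : Type*} [AddCommGroup V] [Module ℝ V] [FiniteDimensional ℝ V]
    (Da Db Dc : Set (V × Module.Dual ℝ V))
    (ha : IsDirac Da) (hb : IsDirac Db) (hc : IsDirac Dc) :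
    bowtie (bowtie Da Db) Dc = bowtie Da (bowtie Db Dc) := by
  ext ⟨v, α⟩
  constructor
  · rintro ⟨β, ⟨γ, h1, h2⟩, h3⟩
    refine ⟨β + γ, ?_, β, ?_, h3⟩
    · simpa [add_assoc] using h1
    · have e : -(β + γ) + β = -γ := by abel
      simpa only [e] using h2
  · rintro ⟨β, h1, γ, h2, h3⟩
    refine ⟨γ, ⟨β - γ, ?_, ?_⟩, h3⟩
    · have e : α + γ + (β - γ) = α + β := by abel
      simpa only [e] using h1
    · have e : -(β - γ) = -β + γ := by abel
      simpa only [e] using h2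
end

section
/- For any linear map φ : U → W between finite-dimensional real vector spaces and any Dirac structure D_U on U, the push-forward φ_* D_U is a Dirac structure on W. -/
/-- The push-forward of a Dirac structure `D_U` on `U` along a linear map
`φ : U → W`: `φ_* D_U = {(φ(u), α) : u ∈ U, α ∈ W*, (u, φ*(α)) ∈ D_U}`, where
`φ* : W* → U*` is the dual map. -/
def pushforward {U W : Type*} [AddCommGroup U] [Module ℝ U]
    [AddCommGroup W] [Module ℝ W]
    (φ : U →ₗ[ℝ] W) (D : Set (U × Module.Dual ℝ U)) :
    Set (W × Module.Dual ℝ W) :=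
  {p | ∃ u : U, p.1 = φ u ∧ (u, p.2.comp φ) ∈ D}

/-- For any linear map `φ : U → W` between finite-dimensional real vector
spaces and any Dirac structure `D_U` on `U`, the push-forward `φ_* D_U` is a
Dirac structure on `W`. -/
theorem pushforward_isDirac
    {U W : Type*} [AddCommGroup U] [Module ℝ U] [FiniteDimensional ℝ U]
    [AddCommGroup W] [Module ℝ W] [FiniteDimensional ℝ W]
    (φ : U →ₗ[ℝ] W) (D : Set (U × Module.Dual ℝ U)) (hD : IsDirac D) :
    IsDirac (pushforward φ D) := by
  have hadd : ∀ x ∈ D, ∀ y ∈ D, x + y ∈ D := by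
    intro x hx y hy
    refine (hD _).2 fun z hz => ?_
    have h1 := (hD x).1 hx z hz
    have h2 := (hD y).1 hy z hz
    simp only [symPair, Prod.fst_add, Prod.snd_add, map_add, LinearMap.add_apply] at *
    linarith
  have hsmul : ∀ (c : ℝ), ∀ x ∈ D, c • x ∈ D := by
    intro c x hx
    refine (hD _).2 fun z hz => ?_
    have h1 := (hD x).1 hx z hz
    simp only [symPair, Prod.smul_fst, Prod.smul_snd, map_smul, LinearMap.smul_apply,
      smul_eq_mul] at *
    rw [← mul_add, h1, mul_zero]
  have hzero : (0 : U × Module.Dual ℝ U) ∈ D :=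
    (hD _).2 fun z _ => by simp [symPair]
  let S : Submodule ℝ (U × Module.Dual ℝ U) :=
    { carrier := D
      add_mem' := fun {a b} ha hb => hadd a ha b hb
      zero_mem' := hzero
      smul_mem' := fun c x hx => hsmul c x hx }
  rintro ⟨w, β⟩
  constructor
  · rintro ⟨u, hu, huD⟩ ⟨w', α⟩ ⟨u', hu', huD'⟩
    have h := (hD _).1 huD _ huD'
    simp only at hu hu'
    subst hu hu'
    simpa [symPair] using h
  · intro h
    let T : (S × Module.Dual ℝ W) →ₗ[ℝ] Module.Dual ℝ U :=
      ((LinearMap.snd ℝ U (Module.Dual ℝ U)).comp S.subtype).coprod (-φ.dualMap)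
    let g : Module.Dual ℝ (S × Module.Dual ℝ W) :=
      LinearMap.coprod ((β.comp φ).comp ((LinearMap.fst ℝ U (Module.Dual ℝ U)).comp S.subtype))
        (Module.Dual.eval ℝ W w)
    have hg : g ∈ LinearMap.range T.dualMap := by
      have e := LinearMap.range_dualMap_eq_dualAnnihilator_ker (K := ℝ)
        (V₁ := S × Module.Dual ℝ W) (V₂ := Module.Dual ℝ U) T
      refine (SetLike.ext_iff.1 e g).2 ((Submodule.mem_dualAnnihilator _).2 ?_)
      rintro ⟨⟨⟨u, a⟩, hua⟩, α⟩ hk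
      have hk' : a + -(α.comp φ) = 0 := hk
      have ha : a = α.comp φ := by rwa [← sub_eq_add_neg, sub_eq_zero] at hk'
      have := h (φ u, α) ⟨u, rfl, ha ▸ hua⟩
      change β (φ u) + α w = 0
      change α w + β (φ u) = 0 at this
      linarith
    obtain ⟨ξ, hξ⟩ := hg
    obtain ⟨v, rfl⟩ := (Module.evalEquiv ℝ U).surjective ξ
    have key : ∀ (u : U) (a : Module.Dual ℝ U) (_ : (u, a) ∈ D) (α : Module.Dual ℝ W),
        a v + -(α (φ v)) = β (φ u) + α w := fun u a hua α =>
      LinearMap.congr_fun hξ ((⟨(u, a), hua⟩ : S), α)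
    refine ⟨-v, ?_, (hD _).2 ?_⟩
    · have : w + φ v = 0 := by
        rw [← Module.forall_dual_apply_eq_zero_iff ℝ]
        intro α
        have := key 0 0 hzero α
        simp only [map_zero, LinearMap.zero_apply] at this
        rw [map_add]
        linarith
      rw [map_neg]
      exact eq_neg_of_add_eq_zero_left this
    · rintro ⟨u, a⟩ hua
      have := key u a hua 0
      simp only [LinearMap.zero_apply] at this
      simp only [symPair, map_neg, LinearMap.comp_apply]
      linarith
end

section
/- Let V₁, V_s, V₂ be finite-dimensional real vector spaces, D₁ a Dirac structure on V₁ × V_s, and D₂ a Dirac structure on V_s × V₂. Set V = V₁ × V_s × V_s × V₂, let Δ_int = {(v₁, v_s, −v_s, v₂) : v₁ ∈ V₁, v_s ∈ V_s, v₂ ∈ V₂} ⊆ V, and let D_int = Δ_int × Δ_int° be the corresponding Dirac structure on V. Let Ψ : V → V₁ × V₂ be the projection (v₁, v_s, v_s', v₂) ↦ (v₁, v₂). Then Ψ_*((D₁ ⊕ D₂) ⋈ D_int) = D₁ ‖ D₂; that is, the composition of D₁ and D₂ equals the push-forward along Ψ of the bowtie interconnection of D₁ ⊕ D₂ with D_int.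 -/
/-- The identification of `V₁* × V₂*` with `(V₁ × V₂)*`:
`(α₁, α₂) ↦ ((w₁,w₂) ↦ α₁(w₁) + α₂(w₂))`. -/
def dualProd {V₁ V₂ : Type*} [AddCommGroup V₁] [Module ℝ V₁]
    [AddCommGroup V₂] [Module ℝ V₂]
    (α₁ : Module.Dual ℝ V₁) (α₂ : Module.Dual ℝ V₂) : Module.Dual ℝ (V₁ × V₂) :=
  α₁.comp (LinearMap.fst ℝ V₁ V₂) + α₂.comp (LinearMap.snd ℝ V₁ V₂)

/-- The Dirac sum `D₁ ⊕ D₂`. -/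
def diracSum {V₁ V₂ : Type*} [AddCommGroup V₁] [Module ℝ V₁]
    [AddCommGroup V₂] [Module ℝ V₂]
    (D₁ : Set (V₁ × Module.Dual ℝ V₁)) (D₂ : Set (V₂ × Module.Dual ℝ V₂)) :
    Set ((V₁ × V₂) × Module.Dual ℝ (V₁ × V₂)) :=
  {p | ∃ α₁ α₂, (p.1.1, α₁) ∈ D₁ ∧ (p.1.2, α₂) ∈ D₂ ∧ p.2 = dualProd α₁ α₂}

/-- The composition `D₁ ‖ D₂` of a Dirac structure `D₁` on `V₁ × V_s` with a
Dirac structure `D₂` on `V_s × V₂`: all `(v₁,v₂,α₁,α₂)` such that there exist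
`v_s ∈ V_s` and `α_s ∈ V_s*` with `(v₁,v_s,α₁,α_s) ∈ D₁` and
`(−v_s,v₂,α_s,α₂) ∈ D₂`. -/
def diracComp {V₁ Vs V₂ : Type*} [AddCommGroup V₁] [Module ℝ V₁]
    [AddCommGroup Vs] [Module ℝ Vs] [AddCommGroup V₂] [Module ℝ V₂]
    (D₁ : Set ((V₁ × Vs) × Module.Dual ℝ (V₁ × Vs)))
    (D₂ : Set ((Vs × V₂) × Module.Dual ℝ (Vs × V₂))) :
    Set ((V₁ × V₂) × Module.Dual ℝ (V₁ × V₂)) :=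
  {p | ∃ (vs : Vs) (αs : Module.Dual ℝ Vs)
        (α₁ : Module.Dual ℝ V₁) (α₂ : Module.Dual ℝ V₂),
      p.2 = dualProd α₁ α₂ ∧
      ((p.1.1, vs), dualProd α₁ αs) ∈ D₁ ∧
      ((-vs, p.1.2), dualProd αs α₂) ∈ D₂}

/-- The composition of Dirac structures is the push-forward, along the
projection `Ψ : V₁ × V_s × V_s × V₂ → V₁ × V₂`, of the bowtie interconnection
of `D₁ ⊕ D₂` with the interconnection Dirac structure
`D_int = Δ_int × Δ_int°`, `Δ_int = {(v₁, v_s, −v_s, v₂)}`: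
`Ψ_*((D₁ ⊕ D₂) ⋈ D_int) = D₁ ‖ D₂`. -/
theorem pushforward_bowtie_eq_comp
    {V₁ Vs V₂ : Type*}
    [AddCommGroup V₁] [Module ℝ V₁] [FiniteDimensional ℝ V₁]
    [AddCommGroup Vs] [Module ℝ Vs] [FiniteDimensional ℝ Vs]
    [AddCommGroup V₂] [Module ℝ V₂] [FiniteDimensional ℝ V₂]
    (D₁ : Set ((V₁ × Vs) × Module.Dual ℝ (V₁ × Vs))) (h₁ : IsDirac D₁)
    (D₂ : Set ((Vs × V₂) × Module.Dual ℝ (Vs × V₂))) (h₂ : IsDirac D₂)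
    (Δint : Set ((V₁ × Vs) × (Vs × V₂)))
    (hΔint : Δint = {v | v.2.1 = -v.1.2})
    (Dint : Set (((V₁ × Vs) × (Vs × V₂)) × Module.Dual ℝ ((V₁ × Vs) × (Vs × V₂))))
    (hDint : Dint = {p | p.1 ∈ Δint ∧ ∀ w ∈ Δint, p.2 w = 0})
    (Ψ : ((V₁ × Vs) × (Vs × V₂)) →ₗ[ℝ] V₁ × V₂)
    (hΨ : Ψ = (LinearMap.fst ℝ V₁ Vs).prodMap (LinearMap.snd ℝ Vs V₂)) :
    pushforward Ψ (bowtie (diracSum D₁ D₂) Dint) = diracComp D₁ D₂ := by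
  subst hΔint hDint hΨ
  ext ⟨⟨x, y⟩, γ⟩
  constructor
  · rintro ⟨⟨⟨a, b⟩, ⟨c, d⟩⟩, hu, β, ⟨α₁, α₂, hα₁, hα₂, hsum⟩, hc, hβ⟩
    have hc : c = -b := hc
    subst hc
    simp only [LinearMap.prodMap_apply, LinearMap.fst_apply, LinearMap.snd_apply,
      Prod.mk.injEq] at hu
    obtain ⟨rfl, rfl⟩ := hu
    have key : ∀ (p : V₁) (q : Vs) (r : V₂),
        γ (p, r) = α₁ (p, q) + α₂ (-q, r) := by
      intro p q r
      have e := LinearMap.congr_fun hsum ((p, q), (-q, r))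
      have e0 := hβ ((p, q), (-q, r)) rfl
      simp [dualProd] at e e0
      rw [e0] at e
      simpa using e
    have hz : γ (0, 0) = 0 := map_zero γ
    have hz1 : α₁ (0, 0) = 0 := map_zero α₁
    have e1 : α₁ = dualProd (γ.comp (LinearMap.inl ℝ V₁ V₂))
        (α₁.comp (LinearMap.inr ℝ V₁ Vs)) := by
      ext p
      · have := key p 0 0
        have z : ((0 : Vs), (0 : V₂)) = 0 := rfl
        simp [z] at this
        simp [dualProd, hz, hz1, this]
      · simp [dualProd, hz, hz1]
    have e2 : α₂ = dualProd (α₁.comp (LinearMap.inr ℝ V₁ Vs))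
        (γ.comp (LinearMap.inr ℝ V₁ V₂)) := by
      ext p
      · have h := key 0 (-p) 0
        have z : ((0 : V₁), (0 : V₂)) = 0 := rfl
        have z' : ((0 : V₁), -p) = -(0, p) := by simp
        rw [z, z', map_neg, map_zero, neg_neg] at h
        simp [dualProd, hz, hz1]
        linarith
      · have := key 0 0 p
        have z : ((0 : V₁), (0 : Vs)) = 0 := rfl
        simp [z] at this
        simp [dualProd, hz, hz1, this]
    refine ⟨b, α₁.comp (LinearMap.inr ℝ V₁ Vs), γ.comp (LinearMap.inl ℝ V₁ V₂),
      γ.comp (LinearMap.inr ℝ V₁ V₂), ?_, ?_, ?_⟩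
    · ext p <;> simp [dualProd, hz, hz1]
    · rw [← e1]; exact hα₁
    · rw [← e2]; exact hα₂
  · rintro ⟨vs, αs, α₁, α₂, hγ, hD₁, hD₂⟩
    have hγ : γ = dualProd α₁ α₂ := hγ
    subst hγ
    refine ⟨((x, vs), (-vs, y)), rfl,
      dualProd (dualProd α₁ αs) (dualProd αs α₂) - (dualProd α₁ α₂).comp
        ((LinearMap.fst ℝ V₁ Vs).prodMap (LinearMap.snd ℝ Vs V₂)),
      ⟨_, _, hD₁, hD₂, ?_⟩, rfl, ?_⟩
    · simp
    · rintro ⟨⟨a, b⟩, ⟨c, d⟩⟩ hc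
      have hc : c = -b := hc
      subst hc
      simp [dualProd]
end

section
/- Let V₁, V_s, V₂ be finite-dimensional real vector spaces. If D₁ is a Dirac structure on V₁ × V_s and D₂ is a Dirac structure on V_s × V₂, then the composition D₁ ‖ D₂ is a Dirac structure on V₁ × V₂. -/
/-- A Dirac structure as a submodule. -/
def diracSub {V : Type*} [AddCommGroup V] [Module ℝ V]
    (D : Set (V × Module.Dual ℝ V)) (h : IsDirac D) : Submodule ℝ (V × Module.Dual ℝ V) where
  carrier := D
  zero_mem' := by
    rw [h]; intro x _; simp [symPair]
  add_mem' := by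
    intro a b ha hb
    rw [h] at ha hb ⊢
    intro x hx
    have e1 := ha x hx
    have e2 := hb x hx
    simp only [symPair, Prod.fst_add, Prod.snd_add, map_add, LinearMap.add_apply] at *
    linarith
  smul_mem' := by
    intro c a ha
    rw [h] at ha ⊢
    intro x hx
    have e1 := ha x hx
    simp only [symPair, Prod.smul_fst, Prod.smul_snd, map_smul, LinearMap.smul_apply,
      smul_eq_mul] at *
    rw [← mul_add, e1, mul_zero]

theorem dualProd_apply' {V₁ V₂ : Type*} [AddCommGroup V₁] [Module ℝ V₁]
    [AddCommGroup V₂] [Module ℝ V₂]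
    (α₁ : Module.Dual ℝ V₁) (α₂ : Module.Dual ℝ V₂) (x : V₁ × V₂) :
    dualProd α₁ α₂ x = α₁ x.1 + α₂ x.2 := rfl

theorem dualProd_eta {V₁ V₂ : Type*} [AddCommGroup V₁] [Module ℝ V₁]
    [AddCommGroup V₂] [Module ℝ V₂] (α : Module.Dual ℝ (V₁ × V₂)) :
    α = dualProd (α.comp (LinearMap.inl ℝ V₁ V₂)) (α.comp (LinearMap.inr ℝ V₁ V₂)) := by
  have h0 : α (0, 0) = 0 := map_zero α
  ext x <;> simp [dualProd, h0]

/-- If `D₁` is a Dirac structure on `V₁ × V_s` and `D₂` is a Dirac structure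
on `V_s × V₂`, then the composition `D₁ ‖ D₂` is a Dirac structure on
`V₁ × V₂`. -/
theorem diracComp_isDirac
    {V₁ Vs V₂ : Type*}
    [AddCommGroup V₁] [Module ℝ V₁] [FiniteDimensional ℝ V₁]
    [AddCommGroup Vs] [Module ℝ Vs] [FiniteDimensional ℝ Vs]
    [AddCommGroup V₂] [Module ℝ V₂] [FiniteDimensional ℝ V₂]
    (D₁ : Set ((V₁ × Vs) × Module.Dual ℝ (V₁ × Vs))) (h₁ : IsDirac D₁)
    (D₂ : Set ((Vs × V₂) × Module.Dual ℝ (Vs × V₂))) (h₂ : IsDirac D₂) :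
    IsDirac (diracComp D₁ D₂) := by
  intro y
  constructor
  · rintro ⟨ws, βs, β₁, β₂, hy, hy1, hy2⟩ x ⟨vs, αs, α₁, α₂, hx, hx1, hx2⟩
    have e1 := (h₁ _).1 hy1 _ hx1
    have e2 := (h₂ _).1 hy2 _ hx2
    simp only [symPair, hx, hy, dualProd_apply', map_neg] at *
    linarith
  · intro hy
    obtain ⟨⟨w₁, w₂⟩, β⟩ := y
    let S₁ := diracSub D₁ h₁
    let S₂ := diracSub D₂ h₂
    let T : (S₁ × S₂) →ₗ[ℝ] (Vs × Module.Dual ℝ Vs) :=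
      { toFun := fun d => (d.1.1.1.2 + d.2.1.1.1,
          d.1.1.2.comp (LinearMap.inr ℝ V₁ Vs) - d.2.1.2.comp (LinearMap.inl ℝ Vs V₂))
        map_add' := by
          intro a b
          refine Prod.ext ?_ ?_
          · simp; abel
          · ext u; simp; abel
        map_smul' := by
          intro c a
          refine Prod.ext ?_ ?_
          · simp
          · ext u; simp [mul_sub] }
    let f : Module.Dual ℝ (S₁ × S₂) :=
      { toFun := fun d => β (d.1.1.1.1, d.2.1.1.2) + d.1.1.2 (w₁, 0) + d.2.1.2 (0, w₂)
        map_add' := by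
          intro a b
          have : β (a.1.1.1.1 + b.1.1.1.1, a.2.1.1.2 + b.2.1.1.2)
            = β (a.1.1.1.1, a.2.1.1.2) + β (b.1.1.1.1, b.2.1.1.2) := by
            rw [← map_add]; rfl
          simp [this]; ring
        map_smul' := by
          intro c a
          have : β (c • a.1.1.1.1, c • a.2.1.1.2) = c * β (a.1.1.1.1, a.2.1.1.2) := by
            rw [← smul_eq_mul, ← map_smul]; rfl
          simp [this]; ring }
    have hf : f ∈ (LinearMap.ker T).dualAnnihilator := by
      rw [Submodule.mem_dualAnnihilator]
      rintro ⟨⟨⟨⟨v₁, vs⟩, α⟩, hd1⟩, ⟨⟨⟨vs', v₂⟩, α'⟩, hd2⟩⟩ hT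
      have hT' : T _ = 0 := hT
      have t1 : vs + vs' = 0 := congrArg Prod.fst hT'
      have t2 : α.comp (LinearMap.inr ℝ V₁ Vs) - α'.comp (LinearMap.inl ℝ Vs V₂) = 0 :=
        congrArg Prod.snd hT'
      have t1' : vs' = -vs := (neg_eq_of_add_eq_zero_right t1).symm
      have t2' := sub_eq_zero.1 t2
      subst t1'
      have m : ((v₁, v₂), dualProd (α.comp (LinearMap.inl ℝ V₁ Vs))
          (α'.comp (LinearMap.inr ℝ Vs V₂))) ∈ diracComp D₁ D₂ := by
        refine ⟨vs, α.comp (LinearMap.inr ℝ V₁ Vs), _, _, rfl, ?_, ?_⟩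
        · rw [← dualProd_eta]; exact hd1
        · rw [t2', ← dualProd_eta]; exact hd2
      have := hy _ m
      simp only [symPair, dualProd_apply'] at this
      change β (v₁, v₂) + α (w₁, 0) + α' (0, w₂) = 0
      change α (w₁, 0) + α' (0, w₂) + β (v₁, v₂) = 0 at this
      linarith
    obtain ⟨g, hg⟩ : f ∈ LinearMap.range T.dualMap := by
      have := LinearMap.range_dualMap_eq_dualAnnihilator_ker (K := ℝ) (V₁ := S₁ × S₂) (V₂ := Vs × Module.Dual ℝ Vs) T
      exact this.symm.le hf
    obtain ⟨us, hus⟩ := (Module.evalEquiv ℝ Vs).surjective (g.comp (LinearMap.inr ℝ _ _))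
    let γ : Module.Dual ℝ Vs := g.comp (LinearMap.inl ℝ _ _)
    have hgg : ∀ u δ, g (u, δ) = γ u + δ us := by
      intro u δ
      have h1 : δ us = g (0, δ) := by
        have := congrArg (fun k => k δ) hus
        simpa using this
      have h2 : γ u = g (u, 0) := rfl
      rw [h1, h2, ← map_add]; simp
    have key : ∀ d₁ ∈ D₁, ∀ d₂ ∈ D₂,
        γ (d₁.1.2 + d₂.1.1) + (d₁.2 (0, us) - d₂.2 (us, 0))
          = β (d₁.1.1, d₂.1.2) + d₁.2 (w₁, 0) + d₂.2 (0, w₂) := by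
      intro d₁ hd1 d₂ hd2
      have e := congrArg (fun k => k (⟨d₁, hd1⟩, ⟨d₂, hd2⟩)) hg
      exact (hgg _ _).symm.trans e
    have z1 : (0 : (V₁ × Vs) × Module.Dual ℝ (V₁ × Vs)) ∈ D₁ := S₁.zero_mem
    have z2 : (0 : (Vs × V₂) × Module.Dual ℝ (Vs × V₂)) ∈ D₂ := S₂.zero_mem
    refine ⟨-us, -γ, β.comp (LinearMap.inl ℝ _ _), β.comp (LinearMap.inr ℝ _ _),
      dualProd_eta β, ?_, ?_⟩
    · rw [h₁]
      rintro ⟨⟨v₁, vs⟩, α⟩ hd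
      have k := key _ hd 0 z2
      have s : α (w₁, -us) = α (w₁, 0) - α (0, us) := by rw [← map_sub]; simp
      simp [symPair, dualProd_apply'] at k ⊢
      linarith
    · rw [h₂]
      rintro ⟨⟨vs, v₂⟩, α⟩ hd
      have k := key 0 z1 _ hd
      have s : α (us, w₂) = α (us, 0) + α (0, w₂) := by rw [← map_add]; simp
      simp [symPair, dualProd_apply'] at k ⊢
      linarith
end

section
/- Let D_a and D_b be Dirac structures on V. Let K = {((0,0),(−ξ,ξ)) : ξ ∈ V*} ⊆ (V × V) × (V* × V*), let K^⊥ be its orthogonal complement with respect to the symmetric pairing on (V × V) × (V × V)*, and define the Dirac tensor product D_a ⊠ D_b as the quotient ((D_a ⊕ D_b) ∩ (K^⊥ + K)) / K. Then the map sending the class of ((v,v),(α,α')) ∈ (D_a ⊕ D_b) ∩ (K^⊥ + K) to (v, α + α') ∈ V × V* is a well-defined linear bijection from D_a ⊠ D_b onto the bowtie product D_a ⋈ D_b; in particular D_a ⊠ D_b is isomorphic to D_a ⋈ D_b. -/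
/-- The symmetric pairing on `(V × V) × (V × V)*`, identifying `(V × V)*` with
`V* × V*`. -/
def symPair₂ {V : Type*} [AddCommGroup V] [Module ℝ V]
    (x y : (V × V) × (Module.Dual ℝ V × Module.Dual ℝ V)) : ℝ :=
  x.2.1 y.1.1 + x.2.2 y.1.2 + y.2.1 x.1.1 + y.2.2 x.1.2

/-- Let `D_a`, `D_b` be Dirac structures on `V`.  With
`K = {((0,0),(−ξ,ξ)) : ξ ∈ V*}`, `K^⊥` its orthogonal complement for the
symmetric pairing on `(V × V) × (V × V)*`, and
`T = (D_a ⊕ D_b) ∩ (K^⊥ + K)` (so that `D_a ⊠ D_b = T / K`), the linear map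
sending `((v,v),(α,α'))` to `(v, α + α')` descends to a well-defined linear
bijection from `D_a ⊠ D_b` onto the bowtie product `D_a ⋈ D_b`. -/
theorem tensor_product_equiv_bowtie
    {V : Type*} [AddCommGroup V] [Module ℝ V] [FiniteDimensional ℝ V]
    (Da Db : Set (V × Module.Dual ℝ V)) (ha : IsDirac Da) (hb : IsDirac Db)
    (K : Set ((V × V) × (Module.Dual ℝ V × Module.Dual ℝ V)))
    (hK : K = {p | ∃ ξ : Module.Dual ℝ V, p = ((0, 0), (-ξ, ξ))})
    (Korth : Set ((V × V) × (Module.Dual ℝ V × Module.Dual ℝ V)))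
    (hKorth : Korth = {y | ∀ x ∈ K, symPair₂ x y = 0})
    (T : Set ((V × V) × (Module.Dual ℝ V × Module.Dual ℝ V)))
    (hT : T = {p | (p.1.1, p.2.1) ∈ Da ∧ (p.1.2, p.2.2) ∈ Db}
      ∩ {y | ∃ a ∈ Korth, ∃ b ∈ K, y = a + b})
    (Φ : ((V × V) × (Module.Dual ℝ V × Module.Dual ℝ V)) →ₗ[ℝ]
      V × Module.Dual ℝ V)
    (hΦ : ∀ x, Φ x = (x.1.1, x.2.1 + x.2.2)) :
    -- `Φ` is well defined on the quotient `T / K`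
    (∀ x ∈ T, ∀ y ∈ T, x - y ∈ K → Φ x = Φ y) ∧
    -- the induced map on `T / K` is injective
    (∀ x ∈ T, ∀ y ∈ T, Φ x = Φ y → x - y ∈ K) ∧
    -- and its image is exactly the bowtie product
    Φ '' T = bowtie Da Db := by
  have hdiag : ∀ x ∈ T, x.1.1 = x.1.2 := by
    intro x hx
    rw [hT] at hx
    obtain ⟨-, a, ha', b, hb', rfl⟩ := hx
    rw [hK] at hb'
    obtain ⟨ξ, rfl⟩ := hb'
    rw [hKorth] at ha'
    have h0 : a.1.2 - a.1.1 = 0 := by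
      rw [← Module.forall_dual_apply_eq_zero_iff ℝ]
      intro f
      have := ha' ((0, 0), (-f, f)) (by rw [hK]; exact ⟨f, rfl⟩)
      simp [symPair₂] at this
      rw [map_sub]
      linarith
    have h1 := (sub_eq_zero.mp h0).symm
    simpa using h1
  refine ⟨?_, ?_, ?_⟩
  · intro x _ y _ h
    rw [hK] at h
    obtain ⟨ξ, h⟩ := h
    rw [← sub_eq_zero, ← map_sub, h, hΦ]
    simp
  · intro x hx y hy h
    have h1 := hdiag x hx
    have h2 := hdiag y hy
    rw [hΦ, hΦ, Prod.mk.injEq] at h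
    obtain ⟨h3, h4⟩ := h
    rw [hK]
    refine ⟨x.2.2 - y.2.2, ?_⟩
    refine Prod.ext (Prod.ext ?_ ?_) (Prod.ext ?_ ?_)
    · simp [h3]
    · simp [← h1, ← h2, h3]
    · change x.2.1 - y.2.1 = -(x.2.2 - y.2.2)
      have h5 : x.2.1 = y.2.1 + y.2.2 - x.2.2 := eq_sub_of_add_eq h4
      rw [h5]
      abel
    · rfl
  · ext p
    constructor
    · rintro ⟨x, hx, rfl⟩
      have h1 := hdiag x hx
      rw [hT] at hx
      obtain ⟨⟨hA, hB⟩, -⟩ := hx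
      rw [hΦ]
      refine ⟨-x.2.2, ?_, ?_⟩
      · simpa using hA
      · simpa [h1] using hB
    · rintro ⟨β, hA, hB⟩
      refine ⟨((p.1, p.1), (p.2 + β, -β)), ?_, ?_⟩
      · rw [hT]
        refine ⟨⟨hA, hB⟩, ((p.1, p.1), (p.2 + β, -β)), ?_, 0, ?_, by simp⟩
        · rw [hKorth]
          intro x hx
          rw [hK] at hx
          obtain ⟨ξ, rfl⟩ := hx
          simp [symPair₂]
        · rw [hK]
          exact ⟨0, by rw [neg_zero]; rfl⟩
      · rw [hΦ]
        simp
end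

section
/- Let Δ₁ ⊆ V₁ and Δ₂ ⊆ V₂ be subspaces, Ω₁ and Ω₂ skew-symmetric bilinear forms on V₁ and V₂ respectively, and Δ_c ⊆ V₁ × V₂ a subspace. Then the interconnection of the induced Dirac structures D(Δ₁,Ω₁) and D(Δ₂,Ω₂) through the interconnection Dirac structure D_int = Δ_c × Δ_c° satisfies (D(Δ₁,Ω₁) ⊕ D(Δ₂,Ω₂)) ⋈ D_int = D((Δ₁ × Δ₂) ∩ Δ_c, Ω₁ ⊕ Ω₂), where Ω₁ ⊕ Ω₂ is the skew-symmetric bilinear form on V₁ × V₂ given by (Ω₁ ⊕ Ω₂)((v₁,v₂),(w₁,w₂)) = Ω₁(v₁,w₁) + Ω₂(v₂,w₂). -/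
/-- The Dirac structure `D(Δ,Ω)` on `V` induced from a subspace `Δ ⊆ V` and a
two-form `Ω`. -/
def inducedDirac {V : Type*} [AddCommGroup V] [Module ℝ V]
    (Δ : Submodule ℝ V) (Ω : V → V → ℝ) : Set (V × Module.Dual ℝ V) :=
  {p | p.1 ∈ Δ ∧ ∀ w ∈ Δ, p.2 w = Ω p.1 w}

/-- The interconnection of the induced Dirac structures `D(Δ₁,Ω₁)` and
`D(Δ₂,Ω₂)` through the interconnection Dirac structure
`D_int = Δ_c × Δ_c°` satisfies
`(D(Δ₁,Ω₁) ⊕ D(Δ₂,Ω₂)) ⋈ D_int = D((Δ₁ × Δ₂) ∩ Δ_c, Ω₁ ⊕ Ω₂)`. -/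
theorem interconnection_of_induced_dirac
    {V₁ V₂ : Type*} [AddCommGroup V₁] [Module ℝ V₁] [FiniteDimensional ℝ V₁]
    [AddCommGroup V₂] [Module ℝ V₂] [FiniteDimensional ℝ V₂]
    (Δ₁ : Submodule ℝ V₁) (Δ₂ : Submodule ℝ V₂)
    (Ω₁ : V₁ →ₗ[ℝ] V₁ →ₗ[ℝ] ℝ) (Ω₂ : V₂ →ₗ[ℝ] V₂ →ₗ[ℝ] ℝ)
    (hΩ₁ : ∀ v w, Ω₁ v w = - Ω₁ w v) (hΩ₂ : ∀ v w, Ω₂ v w = - Ω₂ w v)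
    (Δc : Submodule ℝ (V₁ × V₂)) :
    bowtie
        (diracSum (inducedDirac Δ₁ fun v w => Ω₁ v w)
          (inducedDirac Δ₂ fun v w => Ω₂ v w))
        {p : (V₁ × V₂) × Module.Dual ℝ (V₁ × V₂) |
          p.1 ∈ Δc ∧ ∀ w ∈ Δc, p.2 w = 0}
      = inducedDirac (Δ₁.prod Δ₂ ⊓ Δc)
          (fun v w => Ω₁ v.1 w.1 + Ω₂ v.2 w.2) := by
  ext ⟨⟨v₁, v₂⟩, α⟩
  simp only [bowtie, diracSum, inducedDirac, Set.mem_ofPred_eq, Submodule.mem_inf,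
    Submodule.mem_prod]
  constructor
  · rintro ⟨β, ⟨α₁, α₂, ⟨h1, h1'⟩, ⟨h2, h2'⟩, h⟩, hc, hβ⟩
    refine ⟨⟨⟨h1, h2⟩, hc⟩, ?_⟩
    rintro w ⟨⟨hw1, hw2⟩, hw⟩
    have e := LinearMap.congr_fun h w
    have e2 := hβ w hw
    simp only [dualProd, LinearMap.add_apply, LinearMap.neg_apply, LinearMap.comp_apply,
      LinearMap.fst_apply, LinearMap.snd_apply] at e e2
    rw [h1' _ hw1, h2' _ hw2] at e
    linarith
  · rintro ⟨⟨⟨h1, h2⟩, hc⟩, hα⟩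
    have hm : α - dualProd (Ω₁ v₁) (Ω₂ v₂) ∈ (Δ₁.prod Δ₂ ⊓ Δc).dualAnnihilator := by
      rw [Submodule.mem_dualAnnihilator]
      rintro w ⟨⟨hw1, hw2⟩, hw⟩
      have := hα w ⟨⟨hw1, hw2⟩, hw⟩
      simp [dualProd, this]
    rw [Subspace.dualAnnihilator_inf_eq, Submodule.mem_sup] at hm
    obtain ⟨a, ha, b, hb, hab⟩ := hm
    rw [Submodule.mem_dualAnnihilator] at ha hb
    refine ⟨-b, ⟨Ω₁ v₁ + a.comp (LinearMap.inl ℝ V₁ V₂),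
      Ω₂ v₂ + a.comp (LinearMap.inr ℝ V₁ V₂), ⟨h1, ?_⟩, ⟨h2, ?_⟩, ?_⟩, hc, ?_⟩
    · intro w hw
      have := ha (w, 0) ⟨hw, Δ₂.zero_mem⟩
      simp [this]
    · intro w hw
      have := ha (0, w) ⟨Δ₁.zero_mem, hw⟩
      simp [this]
    · have e : α = a + b + dualProd (Ω₁ v₁) (Ω₂ v₂) := by rw [hab]; abel
      rw [e]
      have h0 : a (0, 0) = 0 := a.map_zero
      ext w <;> simp [dualProd, h0] <;> ring
    · intro w hw
      simpa using hb w hw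
end
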